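/- arXiv:1503.02487 — 2 statements merged into one kernel-verified Lean document; each statement's English description precedes it below -/
import Mathlib

section
/- Let 0 < k < d with greedy X-decomposition (k_1, …, k_n), set k̄ := Σ_{i=1}^n k_i·q̄_i and B := Σ_{1 ≤ j < i ≤ n} (q̄_{X_j})_{i−j}·k_i·k_j. Regard 𝕃(k) as a subset of ℝ². Then twice the Lebesgue area of the bounded region (ℝ≥0²) \ convexHull(𝕃(k)) equals k·k̄ − d·B. (Equivalently, the Newton number of the lattice 𝕃(k), defined as μ := 1 + (2V − k − k̄)/d where V is that area, equals ((d−1) + (k−1)(k̄−1))/d − B, which is the formula μ_X(k) = ((d−1)+(k−1)(k̄−1))/d − [0,k]Q[k,0]^t.) -/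
/-- The remainders of the greedy change-making algorithm for the coin system
`Q 0, Q 1, …`: `r_0 = k % Q 0` and `r_{i+1} = r_i % Q (i+1)`. -/
def hjRem (Q : ℕ → ℤ) (k : ℤ) : ℕ → ℤ
  | 0 => k % Q 0
  | i + 1 => hjRem Q k i % Q (i + 1)

/-- The greedy digits for the coin system `Q 0, Q 1, …`:
`g_0 = ⌊k / Q 0⌋` and `g_{i+1} = ⌊r_i / Q (i+1)⌋`.  For `0 ≤ k < d = Q 0`
the digits at indices `1, …, n` form the greedy `X`-decomposition of `k`. -/
def hjGreedy (Q : ℕ → ℤ) (k : ℤ) : ℕ → ℤ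
  | 0 => k / Q 0
  | i + 1 => hjRem Q k i / Q (i + 1)

/-!
The `q̄_i` solve the recurrence `u_{i+1} = c_i u_i - u_{i-1}` of the remainders `q_i`, with
`u_0 = 0` and `u_1 = 1`. Constancy of the Casoratian gives `q_i u_{i+1} - q_{i+1} u_i = d`, so
`(q_i, -u_i)` and `(q_{i+1}, -u_{i+1})` form a basis of the lattice `x + q y ≡ 0 (mod d)`.
Comparing solutions of the recurrence on the tail starting at `j` gives
`q_j u_i - q_i u_j = d (q̄_{X_j})_{i-j}`.

The points `V_i = (r_i, k_1 u_1 + ⋯ + k_i u_i)` lie in `𝕃(k)`, and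
`V_i - V_{i-1} = k_i (-q_i, u_i)`. Every point of `𝕃(k)` is
`V_i + a (q_i, -u_i) + b (q_{i+1}, -u_{i+1})`, and the line through `V_i` in direction
`(q_i, -u_i)` supports `𝕃(k)` as soon as `b ≤ 0`. The quadrant forces this: if `ε_i` is `1` or
`0` according to whether `r_i + q_{i+1}` reaches `q_i`, the digits satisfy
`k_{i+1} + ε_{i+1} ≤ c_{i+1} - 2 + ε_i`, which bounds the height of `V_i` by `u_{i+1} - ε_i u_i`.

Hence the `V_i` bound the hull, the area is a sum of trapezoids, and summation by parts turns it
into `k k̄` minus the sum of the minors `k_i k_j (q_j u_i - q_i u_j)`.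
-/

/-! ### The Hirzebruch–Jung recurrence -/

section Recurrence

variable {R : Type*} [CommRing R] {n : ℕ} {c x y : ℕ → R}

/-- The three-term recurrence `x_{i+2} = c_{i+1} x_{i+1} - x_i` for `i < n`, satisfied both by the
remainders `q_i` and by the `q̄_i`. As in the Hirzebruch–Jung data, `c` is indexed from `1`. -/
def IsHJSolution (n : ℕ) (c x : ℕ → R) : Prop :=
  ∀ i < n, x (i + 2) = c (i + 1) * x (i + 1) - x i

/-- The solution `u_0 = 0`, `u_1 = 1` of the Hirzebruch–Jung recurrence; for Hirzebruch–Jung data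
it consists of the `q̄_i`. -/
def hjDual (c : ℕ → R) : ℕ → R
  | 0 => 0
  | 1 => 1
  | i + 2 => c (i + 1) * hjDual c (i + 1) - hjDual c i

theorem isHJSolution_hjDual (n : ℕ) (c : ℕ → R) : IsHJSolution n c (hjDual c) :=
  fun _ _ ↦ rfl

namespace IsHJSolution

theorem sub (hx : IsHJSolution n c x) (hy : IsHJSolution n c y) :
    IsHJSolution n c (fun i ↦ x i - y i) := fun i hi ↦ by
  linear_combination hx i hi - hy i hi

theorem const_mul (hx : IsHJSolution n c x) (a : R) : IsHJSolution n c (fun i ↦ a * x i) :=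
  fun i hi ↦ by linear_combination a * hx i hi

theorem drop (hx : IsHJSolution n c x) (j : ℕ) :
    IsHJSolution (n - j) (fun m ↦ c (j + m)) (fun m ↦ x (j + m)) :=
  fun i hi ↦ hx (j + i) (by omega)

theorem dvd {a : R} (hx : IsHJSolution n c x) (h0 : a ∣ x 0) (h1 : a ∣ x 1) {i : ℕ}
    (hi : i ≤ n + 1) : a ∣ x i := by
  induction i using Nat.twoStepInduction with
  | zero => exact h0
  | one => exact h1
  | more i ih ih' =>
    rw [hx i (by omega)]
    exact dvd_sub ((ih' (by omega)).mul_left _) (ih (by omega))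

theorem eq_of_initial_eq (hx : IsHJSolution n c x) (hy : IsHJSolution n c y) (h0 : x 0 = y 0)
    (h1 : x 1 = y 1) {i : ℕ} (hi : i ≤ n + 1) : x i = y i :=
  sub_eq_zero.1 <| zero_dvd_iff.1 <| (hx.sub hy).dvd (by simp [h0]) (by simp [h1]) hi

theorem casoratian_eq (hx : IsHJSolution n c x) (hy : IsHJSolution n c y) {i : ℕ} (hi : i ≤ n) :
    x i * y (i + 1) - x (i + 1) * y i = x 0 * y 1 - x 1 * y 0 := by
  induction i with
  | zero => rfl
  | succ i ih => linear_combination ih (by omega) + x (i + 1) * hy i hi - y (i + 1) * hx i hi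

end IsHJSolution

end Recurrence

theorem hjDual_nonneg_and_lt_succ {R : Type*} [CommRing R] [LinearOrder R] [IsStrictOrderedRing R]
    {n : ℕ} {c : ℕ → R} (hc : ∀ i < n, 2 ≤ c (i + 1)) {i : ℕ} (hi : i ≤ n) :
    0 ≤ hjDual c i ∧ hjDual c i < hjDual c (i + 1) := by
  induction i with
  | zero => simp [hjDual]
  | succ i ih =>
    obtain ⟨hnonneg, hlt⟩ := ih (by omega)
    refine ⟨hnonneg.trans hlt.le, ?_⟩
    calc hjDual c (i + 1) < 2 * hjDual c (i + 1) - hjDual c i := by linarith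
      _ ≤ c (i + 1) * hjDual c (i + 1) - hjDual c i := by
        gcongr
        exacts [hnonneg.trans hlt.le, hc i hi]

/-! ### Hirzebruch–Jung data -/

/-- `Q 0 > Q 1 > ⋯ > Q n = 1 > Q (n + 1) = 0` are the remainders, and `C 1, …, C n` the partial
quotients, of the Hirzebruch–Jung continued fraction of `Q 0 / Q 1`. -/
structure IsHirzebruchJung (n : ℕ) (Q C : ℕ → ℤ) : Prop where
  last : Q n = 1
  succ_last : Q (n + 1) = 0
  succ_lt : ∀ i ≤ n, Q (i + 1) < Q i
  isHJSolution : IsHJSolution n C Q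

namespace IsHirzebruchJung

variable {n i : ℕ} {Q C : ℕ → ℤ}

theorem strictAntiOn (h : IsHirzebruchJung n Q C) : StrictAntiOn Q (Set.Iic (n + 1)) :=
  strictAntiOn_Iic_of_succ_lt fun i hi ↦ h.succ_lt i (Nat.lt_succ_iff.1 hi)

theorem pos (h : IsHirzebruchJung n Q C) (hi : i ≤ n) : 0 < Q i :=
  h.succ_last ▸ h.strictAntiOn (Set.mem_Iic.2 (by omega)) (Set.mem_Iic.2 le_rfl) (by omega)

theorem nonneg (h : IsHirzebruchJung n Q C) (hi : i ≤ n + 1) : 0 ≤ Q i :=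
  h.succ_last ▸ h.strictAntiOn.antitoneOn hi (Set.mem_Iic.2 le_rfl) hi

theorem two_le (h : IsHirzebruchJung n Q C) (hi : i < n) : 2 ≤ C (i + 1) := by
  have hlt : 1 * Q (i + 1) < C (i + 1) * Q (i + 1) := by
    linarith [h.isHJSolution i hi, h.succ_lt i hi.le, h.nonneg (i := i + 2) (by omega)]
  exact lt_of_mul_lt_mul_right hlt (h.pos hi).le

theorem drop (h : IsHirzebruchJung n Q C) {j : ℕ} (hj : j ≤ n) :
    IsHirzebruchJung (n - j) (fun m ↦ Q (j + m)) (fun m ↦ C (j + m)) where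
  last := by simpa [Nat.add_sub_cancel' hj] using h.last
  succ_last := by simpa [← Nat.add_assoc, Nat.add_sub_cancel' hj] using h.succ_last
  succ_lt i hi := h.succ_lt (j + i) (by omega)
  isHJSolution := h.isHJSolution.drop j

theorem hjDual_nonneg (h : IsHirzebruchJung n Q C) (hi : i ≤ n) : 0 ≤ hjDual C i :=
  (hjDual_nonneg_and_lt_succ (fun _ ↦ h.two_le) hi).1

theorem hjDual_lt_succ (h : IsHirzebruchJung n Q C) (hi : i ≤ n) : hjDual C i < hjDual C (i + 1) :=
  (hjDual_nonneg_and_lt_succ (fun _ ↦ h.two_le) hi).2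

theorem strictMonoOn_hjDual (h : IsHirzebruchJung n Q C) :
    StrictMonoOn (hjDual C) (Set.Iic (n + 1)) :=
  strictMonoOn_Iic_of_lt_succ fun _ hi ↦ h.hjDual_lt_succ (Nat.lt_succ_iff.1 hi)

theorem det_hjDual (h : IsHirzebruchJung n Q C) (hi : i ≤ n) :
    Q i * hjDual C (i + 1) - Q (i + 1) * hjDual C i = Q 0 := by
  simpa [hjDual] using h.isHJSolution.casoratian_eq (isHJSolution_hjDual n C) hi

theorem dvd_mul_hjDual_sub (h : IsHirzebruchJung n Q C) (hi : i ≤ n + 1) :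
    Q 0 ∣ Q 1 * hjDual C i - Q i :=
  (((isHJSolution_hjDual n C).const_mul (Q 1)).sub h.isHJSolution).dvd
    (by simp [hjDual]) (by simp [hjDual]) hi

theorem isCoprime (h : IsHirzebruchJung n Q C) : IsCoprime (Q 0) (Q 1) := by
  obtain ⟨a, ha⟩ := h.dvd_mul_hjDual_sub (i := n) (by omega)
  exact ⟨-a, hjDual C n, by linear_combination ha + h.last⟩

theorem hjDual_last (h : IsHirzebruchJung n Q C) : hjDual C (n + 1) = Q 0 := by
  simpa [h.last, h.succ_last] using h.det_hjDual le_rfl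

theorem isLeast_hjDual (h : IsHirzebruchJung n Q C) (hi : i ∈ Finset.Icc 1 n) :
    IsLeast {t : ℤ | 0 < t ∧ Q 0 ∣ Q 1 * t - Q i} (hjDual C i) := by
  obtain ⟨hi1, hin⟩ := Finset.mem_Icc.1 hi
  have hmono {a b : ℕ} (hab : a < b) (hb : b ≤ n + 1) : hjDual C a < hjDual C b :=
    h.strictMonoOn_hjDual (Set.mem_Iic.2 (by omega)) hb hab
  have hlt : hjDual C i < Q 0 := h.hjDual_last ▸ hmono (by omega) le_rfl
  have hcong := h.dvd_mul_hjDual_sub (i := i) (by omega)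
  refine ⟨⟨hmono hi1 (by omega), hcong⟩, fun t ⟨htpos, ht⟩ ↦ ?_⟩
  by_contra! htlt
  have hdvd : Q 0 ∣ hjDual C i - t := h.isCoprime.dvd_of_dvd_mul_left <| by
    convert dvd_sub hcong ht using 1
    ring
  linarith [Int.le_of_dvd (sub_pos.2 htlt) hdvd]

theorem minor_hjDual (h : IsHirzebruchJung n Q C) {j : ℕ} (hji : j ≤ i) (hin : i ≤ n) :
    Q j * hjDual C i - Q i * hjDual C j = Q 0 * hjDual (fun m ↦ C (j + m)) (i - j) := by
  have hminor : IsHJSolution (n - j) (fun m ↦ C (j + m))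
      (fun m ↦ Q j * hjDual C (j + m) - hjDual C j * Q (j + m)) :=
    (((isHJSolution_hjDual n C).drop j).const_mul _).sub ((h.isHJSolution.drop j).const_mul _)
  have hdual := (isHJSolution_hjDual (n - j) fun m ↦ C (j + m)).const_mul (Q 0)
  have heq := hminor.eq_of_initial_eq hdual (i := i - j) (by simp [hjDual, mul_comm])
    (by simpa [hjDual, mul_comm] using h.det_hjDual (hji.trans hin)) (by omega)
  simpa [Nat.add_sub_cancel' hji, mul_comm] using heq

end IsHirzebruchJung

/-! ### Greedy decompositions -/

section Greedy

variable {Q C : ℕ → ℤ} {k : ℤ} {n i : ℕ}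

theorem hjGreedy_mul_add_hjRem (Q : ℕ → ℤ) (k : ℤ) (i : ℕ) :
    hjGreedy Q k (i + 1) * Q (i + 1) + hjRem Q k (i + 1) = hjRem Q k i :=
  Int.ediv_mul_add_emod _ _

theorem sum_hjGreedy_mul_add_hjRem (Q : ℕ → ℤ) (k : ℤ) (m : ℕ) :
    ∑ i ∈ Finset.Icc 1 m, hjGreedy Q k i * Q i + hjRem Q k m = hjRem Q k 0 := by
  induction m with
  | zero => simp
  | succ m ih =>
    rw [Finset.sum_Icc_succ_top (by omega), add_assoc, hjGreedy_mul_add_hjRem, ih]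

theorem hjRem_nonneg (hQ : Q i ≠ 0) : 0 ≤ hjRem Q k i := by
  cases i <;> exact Int.emod_nonneg _ hQ

theorem hjRem_lt (hQ : 0 < Q i) : hjRem Q k i < Q i := by
  cases i <;> exact Int.emod_lt_of_pos _ hQ

/-- The partial sums `k_1 u_1 + ⋯ + k_m u_m` attached to the greedy digits of `k`. The points
`(hjRem Q k m, hjHeight Q C k m)` are the vertices of the compact boundary of the hull of `𝕃(k)`. -/
def hjHeight (Q C : ℕ → ℤ) (k : ℤ) (m : ℕ) : ℤ :=
  ∑ i ∈ Finset.Icc 1 m, hjGreedy Q k i * hjDual C i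

theorem hjHeight_zero (Q C : ℕ → ℤ) (k : ℤ) : hjHeight Q C k 0 = 0 :=
  rfl

theorem hjHeight_succ (Q C : ℕ → ℤ) (k : ℤ) (m : ℕ) :
    hjHeight Q C k (m + 1) = hjHeight Q C k m + hjGreedy Q k (m + 1) * hjDual C (m + 1) :=
  Finset.sum_Icc_succ_top (by omega) _

/-- The indicator of `q_i ≤ r_i + q_{i+1}`: whether one more coin `q_{i+1}` would overflow the
coin `q_i`. -/
def hjCarry (Q : ℕ → ℤ) (k : ℤ) (i : ℕ) : ℤ :=
  if Q i ≤ hjRem Q k i + Q (i + 1) then 1 else 0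

theorem hjCarry_nonneg : 0 ≤ hjCarry Q k i := by
  unfold hjCarry; split_ifs <;> simp

theorem hjCarry_le_one : hjCarry Q k i ≤ 1 := by
  unfold hjCarry; split_ifs <;> simp

theorem hjCarry_mul_le_hjRem (hQ : Q i ≠ 0) : hjCarry Q k i * (Q i - Q (i + 1)) ≤ hjRem Q k i := by
  unfold hjCarry
  split_ifs
  · linarith
  · simpa using hjRem_nonneg hQ

theorem hjRem_lt_sub_hjCarry (hQ : 0 < Q i) :
    hjRem Q k i < Q i - (1 - hjCarry Q k i) * Q (i + 1) := by
  unfold hjCarry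
  split_ifs
  · simpa using hjRem_lt hQ
  · linarith

namespace IsHirzebruchJung

theorem hjRem_last (h : IsHirzebruchJung n Q C) (k : ℤ) : hjRem Q k n = 0 := by
  have hlt : hjRem Q k n < Q n := hjRem_lt (h.pos le_rfl)
  have hnonneg : 0 ≤ hjRem Q k n := hjRem_nonneg (h.pos le_rfl).ne'
  have := h.last
  omega

theorem hjGreedy_succ_nonneg (h : IsHirzebruchJung n Q C) (k : ℤ) (hi : i < n) :
    0 ≤ hjGreedy Q k (i + 1) :=
  Int.ediv_nonneg (hjRem_nonneg (h.pos hi.le).ne') (h.pos hi).le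

theorem hjRem_antitoneOn (h : IsHirzebruchJung n Q C) (k : ℤ) :
    AntitoneOn (hjRem Q k) (Set.Iic n) :=
  antitoneOn_of_succ_le Set.ordConnected_Iic fun i _ _ hi ↦ by
    rw [Order.succ_eq_add_one, ← hjGreedy_mul_add_hjRem Q k i]
    exact le_add_of_nonneg_left (mul_nonneg (h.hjGreedy_succ_nonneg k hi) (h.pos hi).le)

theorem hjHeight_nonneg (h : IsHirzebruchJung n Q C) (k : ℤ) (hi : i ≤ n) :
    0 ≤ hjHeight Q C k i :=
  Finset.sum_nonneg fun j hj ↦ by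
    obtain ⟨hj1, hji⟩ := Finset.mem_Icc.1 hj
    obtain ⟨j, rfl⟩ := Nat.exists_eq_add_of_le' hj1
    exact mul_nonneg (h.hjGreedy_succ_nonneg k (by omega)) (h.hjDual_nonneg (by omega))

/-- This excludes the digit pattern `c - 1, c - 2, …, c - 2, c - 1`. -/
theorem hjGreedy_add_hjCarry_le (h : IsHirzebruchJung n Q C) (k : ℤ) (hi : i < n) :
    hjGreedy Q k (i + 1) + hjCarry Q k (i + 1) ≤ C (i + 1) - 2 + hjCarry Q k i := by
  have hlow : hjCarry Q k (i + 1) * (Q (i + 1) - Q (i + 2)) ≤ hjRem Q k (i + 1) :=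
    hjCarry_mul_le_hjRem (h.pos hi).ne'
  have hupp : hjRem Q k i < Q i - (1 - hjCarry Q k i) * Q (i + 1) :=
    hjRem_lt_sub_hjCarry (h.pos hi.le)
  have hcarry : 0 ≤ (1 - hjCarry Q k (i + 1)) * Q (i + 2) :=
    mul_nonneg (sub_nonneg.2 hjCarry_le_one) (h.nonneg (by omega))
  have hlt : (hjGreedy Q k (i + 1) + hjCarry Q k (i + 1)) * Q (i + 1) <
      (C (i + 1) - 1 + hjCarry Q k i) * Q (i + 1) := by
    linarith [hjGreedy_mul_add_hjRem Q k i, h.isHJSolution i hi]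
  linarith [Int.add_one_le_of_lt (lt_of_mul_lt_mul_right hlt (h.pos hi).le)]

theorem hjHeight_add_hjCarry_mul_lt (h : IsHirzebruchJung n Q C) (k : ℤ) (hi : i ≤ n) :
    hjHeight Q C k i + hjCarry Q k i * hjDual C i < hjDual C (i + 1) := by
  induction i with
  | zero => simp [hjHeight_zero, hjDual]
  | succ i ih =>
    have hdigit := mul_le_mul_of_nonneg_right (h.hjGreedy_add_hjCarry_le k hi) (h.hjDual_nonneg hi)
    have hcarry := mul_nonneg (sub_nonneg.2 (hjCarry_le_one (Q := Q) (k := k) (i := i)))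
      (sub_nonneg.2 (h.hjDual_lt_succ (i := i) (by omega)).le)
    have hrec := isHJSolution_hjDual n C i hi
    rw [hjHeight_succ]
    linarith [ih (by omega)]

end IsHirzebruchJung

end Greedy

/-! ### Supporting lines of the lattice -/

theorem exists_basis_coeffs_of_dvd {R : Type*} [CommRing R] [IsDomain R] {d e q q' u u' x y : R}
    (hd : d ≠ 0) (hdet : q * u' - q' * u = d) (hu : d ∣ e * u - q) (hu' : d ∣ e * u' - q')
    (hxy : d ∣ x + e * y) : ∃ a b, x = a * q + b * q' ∧ y = -(a * u + b * u') := by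
  obtain ⟨a, ha⟩ : d ∣ x * u' + y * q' := by
    convert dvd_sub (hxy.mul_left u') (hu'.mul_left y) using 1
    ring
  obtain ⟨b, hb⟩ : d ∣ x * u + y * q := by
    convert dvd_sub (hxy.mul_left u) (hu.mul_left y) using 1
    ring
  refine ⟨a, -b, mul_left_cancel₀ hd ?_, mul_left_cancel₀ hd ?_⟩
  · linear_combination (-x) * hdet + q * ha - q' * hb
  · linear_combination (-y) * hdet - u * ha + u' * hb

/-- If `b ≥ 1`, then nonnegativity of the two coordinates forces `0 < a + b + ε` and
`a + b + ε < 1` respectively. -/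
theorem basis_coeff_nonpos {q q' u u' R Y ε a b : ℤ} (hq : 0 ≤ q) (hqq : q' ≤ q) (hu : 0 ≤ u)
    (huu : u ≤ u') (hε : 0 ≤ ε) (hR : R < q - (1 - ε) * q') (hY : Y + ε * u < u')
    (hx : 0 ≤ R + (a * q + b * q')) (hy : 0 ≤ Y - (a * u + b * u')) : b ≤ 0 := by
  by_contra! hb
  have hlow : 0 < a + b + ε := by
    have := mul_nonneg (show 0 ≤ b - 1 + ε by linarith) (sub_nonneg.2 hqq)
    exact pos_of_mul_pos_left (b := q) (by linarith) hq
  have hupp : a + b + ε < 1 := by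
    have := mul_nonneg (show 0 ≤ b - 1 by linarith) (sub_nonneg.2 huu)
    exact lt_of_mul_lt_mul_right (a := u) (by linarith) hu
  linarith

/-- The affine lattice `𝕃(m) = {(r, s) ∈ ℤ≥0² : r + q s ≡ m (mod d)}`, as a subset of `ℝ²`. -/
def affineLattice (d q m : ℤ) : Set (ℝ × ℝ) :=
  {p | ∃ r s : ℤ, 0 ≤ r ∧ 0 ≤ s ∧ d ∣ r + q * s - m ∧ p = ((r : ℝ), (s : ℝ))}

namespace IsHirzebruchJung

variable {Q C : ℕ → ℤ} {n i : ℕ}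

theorem dvd_hjRem_add_mul_hjHeight_sub (h : IsHirzebruchJung n Q C) (k : ℤ) (hi : i ≤ n) :
    Q 0 ∣ hjRem Q k i + Q 1 * hjHeight Q C k i - k := by
  induction i with
  | zero => simpa [hjHeight_zero, hjRem] using (Int.mod_modEq k (Q 0)).symm.dvd
  | succ i ih =>
    convert Int.dvd_add (ih (by omega))
      ((h.dvd_mul_hjDual_sub (i := i + 1) (by omega)).mul_left (hjGreedy Q k (i + 1))) using 1
    rw [hjHeight_succ]
    linear_combination hjGreedy_mul_add_hjRem Q k i

theorem vertex_mem_affineLattice (h : IsHirzebruchJung n Q C) (k : ℤ) (hi : i ≤ n) :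
    ((hjRem Q k i : ℝ), (hjHeight Q C k i : ℝ)) ∈ affineLattice (Q 0) (Q 1) k :=
  ⟨_, _, hjRem_nonneg (h.pos hi).ne', h.hjHeight_nonneg k hi,
    h.dvd_hjRem_add_mul_hjHeight_sub k hi, rfl⟩

theorem vertex_le_of_dvd (h : IsHirzebruchJung n Q C) {k x y : ℤ} (hi : i ≤ n) (hx : 0 ≤ x)
    (hy : 0 ≤ y) (hxy : Q 0 ∣ x + Q 1 * y - k) :
    hjDual C i * hjRem Q k i + Q i * hjHeight Q C k i ≤ hjDual C i * x + Q i * y := by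
  obtain ⟨a, b, ha, hb⟩ := exists_basis_coeffs_of_dvd (h.pos (Nat.zero_le n)).ne'
    (h.det_hjDual hi) (h.dvd_mul_hjDual_sub (by omega)) (h.dvd_mul_hjDual_sub (by omega))
    (x := x - hjRem Q k i) (y := y - hjHeight Q C k i) (by
      convert dvd_sub hxy (h.dvd_hjRem_add_mul_hjHeight_sub k hi) using 1
      ring)
  have hb0 : b ≤ 0 := basis_coeff_nonpos (a := a) (h.pos hi).le (h.succ_lt i hi).le
    (h.hjDual_nonneg hi) (h.hjDual_lt_succ hi).le hjCarry_nonneg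
    (hjRem_lt_sub_hjCarry (h.pos hi)) (h.hjHeight_add_hjCarry_mul_lt k hi)
    (by linarith) (by linarith)
  have hdrop : hjDual C i * (x - hjRem Q k i) + Q i * (y - hjHeight Q C k i) = -b * Q 0 := by
    rw [ha, hb, ← h.det_hjDual hi]
    ring
  linarith [mul_nonneg (neg_nonneg.2 hb0) (h.pos (Nat.zero_le n)).le]

theorem vertex_le_of_mem_convexHull (h : IsHirzebruchJung n Q C) (k : ℤ) (hi : i ≤ n) {p : ℝ × ℝ}
    (hp : p ∈ convexHull ℝ (affineLattice (Q 0) (Q 1) k)) :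
    (hjDual C i * hjRem Q k i + Q i * hjHeight Q C k i : ℝ) ≤ hjDual C i * p.1 + Q i * p.2 := by
  refine convexHull_min ?_ (convex_halfSpace_ge (𝕜 := ℝ) (f := fun p : ℝ × ℝ ↦
    (hjDual C i * p.1 + Q i * p.2 : ℝ)) ⟨fun a b ↦ ?_, fun c a ↦ ?_⟩ _) hp
  · rintro _ ⟨r, s, hr, hs, hdvd, rfl⟩
    have hle := h.vertex_le_of_dvd hi hr hs hdvd
    simp only [Set.mem_ofPred_eq]
    exact_mod_cast hle
  · simp only [Prod.fst_add, Prod.snd_add]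
    ring
  · simp only [Prod.smul_fst, Prod.smul_snd, smul_eq_mul]
    ring

end IsHirzebruchJung

/-! ### Convex hulls of periodic sets -/

theorem add_smul_mem_convexHull {𝕜 E : Type*} [Field 𝕜] [LinearOrder 𝕜] [IsStrictOrderedRing 𝕜]
    [Archimedean 𝕜] [AddCommGroup E] [Module 𝕜 E] {L : Set E} {p w : E}
    (hw : ∀ z ∈ L, z + w ∈ L) (hp : p ∈ convexHull 𝕜 L) {t : 𝕜} (ht : 0 ≤ t) :
    p + t • w ∈ convexHull 𝕜 L := by
  have hadd : convexHull 𝕜 L ⊆ (· + w) ⁻¹' convexHull 𝕜 L :=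
    convexHull_min (fun z hz ↦ subset_convexHull 𝕜 L (hw z hz))
      ((convex_convexHull 𝕜 L).translate_preimage_left w)
  have hnat (m : ℕ) : p + (m : 𝕜) • w ∈ convexHull 𝕜 L := by
    induction m with
    | zero => simpa using hp
    | succ m ih => simpa [add_smul, add_assoc] using hadd ih
  obtain ⟨m, hm⟩ := exists_nat_gt t
  have hm0 : (0 : 𝕜) < m := ht.trans_lt hm
  have hmem := (convex_convexHull 𝕜 L).add_smul_mem hp (hnat m) (t := t / m)
    ⟨by positivity, (div_le_one hm0).2 hm.le⟩
  rwa [smul_smul, div_mul_cancel₀ _ hm0.ne'] at hmem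

theorem isUpperSet_convexHull_of_add_mem {L : Set (ℝ × ℝ)} {a b : ℝ} (ha : 0 < a) (hb : 0 < b)
    (hLa : ∀ p ∈ L, p + (a, 0) ∈ L) (hLb : ∀ p ∈ L, p + (0, b) ∈ L) :
    IsUpperSet (convexHull ℝ L) := by
  intro p p' hpp' hp
  have hsub : 0 ≤ p' - p := sub_nonneg.2 hpp'
  have hmem := add_smul_mem_convexHull hLb
    (add_smul_mem_convexHull hLa hp (div_nonneg hsub.1 ha.le)) (div_nonneg hsub.2 hb.le)
  convert hmem using 1
  ext <;> simp [ha.ne', hb.ne']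

theorem isUpperSet_convexHull_affineLattice {d : ℤ} (hd : 0 < d) (q m : ℤ) :
    IsUpperSet (convexHull ℝ (affineLattice d q m)) := by
  have hd' : (0 : ℝ) < d := mod_cast hd
  refine isUpperSet_convexHull_of_add_mem hd' hd' ?_ ?_ <;> rintro _ ⟨r, s, hr, hs, hdvd, rfl⟩
  · refine ⟨r + d, s, by omega, hs, ?_, by simp⟩
    convert Int.dvd_add hdvd (dvd_refl d) using 1
    ring
  · refine ⟨r, s + d, hr, by omega, ?_, by simp⟩
    convert Int.dvd_add hdvd (dvd_mul_left d q) using 1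
    ring

/-! ### Area below a convex chain -/

section Area

open MeasureTheory

theorem integral_affine_div (a b c u q : ℝ) :
    ∫ t in a..b, (c - u * t) / q = (b - a) * ((c - u * a) / q + (c - u * b) / q) / 2 := by
  rw [intervalIntegral.integral_div, intervalIntegral.integral_sub (by simp)
    (Continuous.intervalIntegrable (by fun_prop) _ _), intervalIntegral.integral_const,
    intervalIntegral.integral_const_mul, integral_id, smul_eq_mul]
  ring

variable {H : Set (ℝ × ℝ)}

theorem mem_of_line_le (hH : Convex ℝ H) (hup : IsUpperSet H) {x₀ y₀ x₁ y₁ u q c : ℝ}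
    (h₀ : (x₀, y₀) ∈ H) (h₁ : (x₁, y₁) ∈ H) (hq : 0 < q) (hc₀ : u * x₀ + q * y₀ = c)
    (hc₁ : u * x₁ + q * y₁ = c) {p : ℝ × ℝ} (hp1 : p.1 ∈ Set.Icc x₁ x₀)
    (hp : c ≤ u * p.1 + q * p.2) : p ∈ H := by
  obtain ⟨s, t, hs, ht, hst, hp1⟩ := (Convex.mem_Icc (hp1.1.trans hp1.2)).1 hp1
  refine hup ⟨?_, ?_⟩ (hH h₁ h₀ hs ht hst)
  · simp [← hp1]
  · refine le_of_mul_le_mul_left ?_ hq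
    calc q * (s * y₁ + t * y₀) = c - u * p.1 := by
          rw [← hp1]
          linear_combination s * hc₁ + t * hc₀ + c * hst
      _ ≤ q * p.2 := by linarith

theorem strip_sdiff_eq_regionBetween (hH : Convex ℝ H) (hup : IsUpperSet H)
    {x₀ y₀ x₁ y₁ u q c : ℝ} (h₀ : (x₀, y₀) ∈ H) (h₁ : (x₁, y₁) ∈ H) (hq : 0 < q)
    (hc₀ : u * x₀ + q * y₀ = c) (hc₁ : u * x₁ + q * y₁ = c)
    (hsup : ∀ p ∈ H, c ≤ u * p.1 + q * p.2) :
    (Set.Ioc x₁ x₀ ×ˢ Set.Ioi 0) \ H = regionBetween 0 (fun t ↦ (c - u * t) / q)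
      (Set.Ioc x₁ x₀) := by
  ext p
  have hline : p.1 ∈ Set.Ioc x₁ x₀ → (p ∉ H ↔ p.2 < (c - u * p.1) / q) := fun hp1 ↦ by
    rw [lt_div_iff₀ hq, ← not_le, not_iff_not]
    exact ⟨fun hp ↦ by linarith [hsup p hp], fun hp ↦
      mem_of_line_le hH hup h₀ h₁ hq hc₀ hc₁ ⟨hp1.1.le, hp1.2⟩ (by linarith)⟩
  simp only [regionBetween, Set.mem_sdiff, Set.mem_prod, Set.mem_Ioi, Set.mem_Ioo, Pi.zero_apply,
    Set.mem_ofPred_eq, and_assoc]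
  exact and_congr_right fun hp1 ↦ and_congr_right fun _ ↦ hline hp1

theorem volume_strip_sdiff (hH : Convex ℝ H) (hup : IsUpperSet H) {x₀ y₀ x₁ y₁ u q c : ℝ}
    (h₀ : (x₀, y₀) ∈ H) (h₁ : (x₁, y₁) ∈ H) (hx : x₁ ≤ x₀) (hy₀ : 0 ≤ y₀) (hy₁ : 0 ≤ y₁)
    (hq : 0 < q) (hc₀ : u * x₀ + q * y₀ = c) (hc₁ : u * x₁ + q * y₁ = c)
    (hsup : ∀ p ∈ H, c ≤ u * p.1 + q * p.2) :
    volume ((Set.Ioc x₁ x₀ ×ˢ Set.Ioi 0) \ H) = ENNReal.ofReal ((x₀ - x₁) * (y₀ + y₁) / 2) := by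
  have he₀ : (c - u * x₀) / q = y₀ := by rw [div_eq_iff hq.ne']; linarith
  have he₁ : (c - u * x₁) / q = y₁ := by rw [div_eq_iff hq.ne']; linarith
  have hnonneg : ∀ t ∈ Set.Ioc x₁ x₀, 0 ≤ (c - u * t) / q := fun t ht ↦ by
    obtain ⟨a, b, ha, hb, hab, rfl⟩ := (Convex.mem_Icc hx).1 ⟨ht.1.le, ht.2⟩
    calc 0 ≤ a * y₁ + b * y₀ := by positivity
      _ = (c - u * (a * x₁ + b * x₀)) / q := by
        rw [← he₀, ← he₁]
        linear_combination (c / q) * hab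
  rw [strip_sdiff_eq_regionBetween hH hup h₀ h₁ hq hc₀ hc₁ hsup, Measure.volume_eq_prod,
    volume_regionBetween_eq_integral (f := 0) integrableOn_zero
      ((Continuous.integrableOn_Icc (by fun_prop)).mono_set Set.Ioc_subset_Icc_self)
      measurableSet_Ioc hnonneg, sub_zero, ← intervalIntegral.integral_of_le hx,
    integral_affine_div, he₀, he₁, add_comm y₁]

variable {n : ℕ} {x y u q : ℕ → ℝ}

theorem volume_strips_sdiff (hH : Convex ℝ H) (hup : IsUpperSet H)
    (hV : ∀ i ≤ n, (x i, y i) ∈ H) (hx : AntitoneOn x (Set.Iic n)) (hy : ∀ i ≤ n, 0 ≤ y i)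
    (hq : ∀ i < n, 0 < q i) (hedge : ∀ i < n, u i * x i + q i * y i =
      u i * x (i + 1) + q i * y (i + 1))
    (hsup : ∀ i < n, ∀ p ∈ H, u i * x i + q i * y i ≤ u i * p.1 + q i * p.2)
    {m : ℕ} (hm : m ≤ n) :
    volume ((Set.Ioc (x m) (x 0) ×ˢ Set.Ioi 0) \ H) =
      ENNReal.ofReal (∑ i ∈ Finset.range m, (x i - x (i + 1)) * (y i + y (i + 1)) / 2) := by
  have hstep {i j : ℕ} (hij : i ≤ j) (hj : j ≤ n) : x j ≤ x i :=
    hx (Set.mem_Iic.2 (hij.trans hj)) hj hij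
  have hnonneg (i : ℕ) (hi : i < n) : 0 ≤ (x i - x (i + 1)) * (y i + y (i + 1)) / 2 :=
    div_nonneg (mul_nonneg (sub_nonneg.2 (hstep i.le_succ hi))
      (add_nonneg (hy i hi.le) (hy _ hi))) zero_le_two
  have hmeas (a b : ℝ) : MeasurableSet (Set.Ioc a b ×ˢ Set.Ioi (0 : ℝ)) :=
    measurableSet_Ioc.prod measurableSet_Ioi
  induction m with
  | zero => simp
  | succ m ih =>
    have hstrip := volume_strip_sdiff hH hup (hV m (by omega)) (hV _ hm) (hstep m.le_succ hm)
      (hy m (by omega)) (hy _ hm) (hq m hm) rfl (hedge m hm).symm (hsup m hm)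
    rw [Finset.sum_range_succ, ENNReal.ofReal_add
      (Finset.sum_nonneg fun i hi ↦ hnonneg i (by have := Finset.mem_range.1 hi; omega))
      (hnonneg m hm), ← ih (by omega), ← hstrip]
    simp only [Set.sdiff_eq, ← Measure.restrict_apply (hmeas _ _)]
    rw [← Set.Ioc_union_Ioc_eq_Ioc (hstep m.le_succ hm) (hstep m.zero_le (by omega)),
      Set.union_prod, measure_union (Set.disjoint_prod.2 (.inl (Set.Ioc_disjoint_Ioc_of_le le_rfl)))
        (hmeas _ _), add_comm]

/-- The edges are numbered from `0`, the one from `(x i, y i)` to `(x (i + 1), y (i + 1))` lying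
on the line `u i * X + q i * Y = const`. -/
theorem two_mul_volume_quadrant_sdiff_eq_sum (hH : Convex ℝ H) (hup : IsUpperSet H)
    (hV : ∀ i ≤ n, (x i, y i) ∈ H) (hxn : x n = 0) (hy0 : y 0 = 0)
    (hx : AntitoneOn x (Set.Iic n)) (hy : ∀ i ≤ n, 0 ≤ y i)
    (hq : ∀ i < n, 0 < q i) (hedge : ∀ i < n, u i * x i + q i * y i =
      u i * x (i + 1) + q i * y (i + 1))
    (hsup : ∀ i < n, ∀ p ∈ H, u i * x i + q i * y i ≤ u i * p.1 + q i * p.2) :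
    2 * (volume ({p : ℝ × ℝ | 0 ≤ p.1 ∧ 0 ≤ p.2} \ H)).toReal =
      ∑ i ∈ Finset.range n, (x i - x (i + 1)) * (y i + y (i + 1)) := by
  have hopen : volume ({p : ℝ × ℝ | 0 ≤ p.1 ∧ 0 ≤ p.2} \ H) =
      volume ((Set.Ioi 0 ×ˢ Set.Ioi 0) \ H) :=
    measure_congr (((Measure.set_prod_ae_eq Ioi_ae_eq_Ici Ioi_ae_eq_Ici).symm).diff .rfl)
  have hstrip : (Set.Ioi 0 ×ˢ Set.Ioi 0) \ H = (Set.Ioc (x n) (x 0) ×ˢ Set.Ioi 0) \ H := by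
    ext p
    have hright : 0 < p.2 → p ∉ H → p.1 ≤ x 0 := fun hp2 ↦ by
      contrapose!
      exact fun hp1 ↦ hup (a := (x 0, y 0)) ⟨hp1.le, hy0.trans_le hp2.le⟩ (hV 0 n.zero_le)
    simp only [Set.mem_sdiff, Set.mem_prod, Set.mem_Ioi, Set.mem_Ioc, hxn]
    tauto
  have hnonneg : 0 ≤ ∑ i ∈ Finset.range n, (x i - x (i + 1)) * (y i + y (i + 1)) / 2 :=
    Finset.sum_nonneg fun i hi ↦ by
      have hi := Finset.mem_range.1 hi
      have := sub_nonneg.2 (hx (Set.mem_Iic.2 hi.le) hi i.le_succ)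
      have := add_nonneg (hy i hi.le) (hy _ hi)
      positivity
  rw [hopen, hstrip, volume_strips_sdiff hH hup hV hx hy hq hedge hsup le_rfl,
    ENNReal.toReal_ofReal hnonneg, ← Finset.sum_div]
  ring

theorem IsHirzebruchJung.two_mul_volume_sdiff_convexHull {n : ℕ} {Q C : ℕ → ℤ}
    (h : IsHirzebruchJung n Q C) (k : ℤ) :
    2 * (volume ({p : ℝ × ℝ | 0 ≤ p.1 ∧ 0 ≤ p.2} \
        convexHull ℝ (affineLattice (Q 0) (Q 1) k))).toReal =
      ((∑ i ∈ Finset.range n, (hjRem Q k i - hjRem Q k (i + 1)) *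
        (hjHeight Q C k i + hjHeight Q C k (i + 1)) : ℤ) : ℝ) := by
  have hedge (i : ℕ) : hjDual C (i + 1) * hjRem Q k i + Q (i + 1) * hjHeight Q C k i =
      hjDual C (i + 1) * hjRem Q k (i + 1) + Q (i + 1) * hjHeight Q C k (i + 1) := by
    rw [hjHeight_succ, ← hjGreedy_mul_add_hjRem Q k i]
    ring
  push_cast
  refine two_mul_volume_quadrant_sdiff_eq_sum (x := fun i ↦ hjRem Q k i)
    (y := fun i ↦ hjHeight Q C k i) (u := fun i ↦ (hjDual C (i + 1) : ℤ)) (q := fun i ↦ Q (i + 1))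
    (convex_convexHull ℝ _)
    (isUpperSet_convexHull_affineLattice (h.pos n.zero_le) _ _)
    (fun i hi ↦ subset_convexHull ℝ _ (h.vertex_mem_affineLattice k hi))
    (mod_cast h.hjRem_last k) (mod_cast hjHeight_zero Q C k)
    (Int.cast_mono.comp_antitoneOn (h.hjRem_antitoneOn k))
    (fun i hi ↦ mod_cast h.hjHeight_nonneg k hi) (fun i hi ↦ mod_cast h.pos hi)
    (fun i _ ↦ mod_cast hedge i) fun i hi p hp ↦ ?_
  have hsup := h.vertex_le_of_mem_convexHull k hi hp
  have hedge' := congrArg (Int.cast : ℤ → ℝ) (hedge i)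
  push_cast at hedge'
  exact hedge'.trans_le hsup

end Area

/-! ### The sum of the trapezoids -/

theorem sum_mul_partialSum_add {R : Type*} [CommRing R] (a b : ℕ → R) (n : ℕ) :
    ∑ i ∈ Finset.range n,
        a (i + 1) * (∑ j ∈ Finset.Icc 1 i, b j + ∑ j ∈ Finset.Icc 1 (i + 1), b j) =
      (∑ i ∈ Finset.Icc 1 n, a i) * ∑ i ∈ Finset.Icc 1 n, b i -
        ∑ i ∈ Finset.Icc 1 n, ∑ j ∈ Finset.Icc 1 (i - 1), (a j * b i - a i * b j) := by
  induction n with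
  | zero => simp
  | succ n ih =>
    simp only [Finset.sum_range_succ, ih, Finset.sum_Icc_succ_top (Nat.le_add_left 1 n),
      Nat.add_sub_cancel, Finset.sum_sub_distrib, ← Finset.sum_mul, ← Finset.mul_sum]
    ring

theorem IsHirzebruchJung.sum_trapezoids_eq {n : ℕ} {Q C : ℕ → ℤ} (h : IsHirzebruchJung n Q C)
    (k : ℤ) :
    ∑ i ∈ Finset.range n, (hjRem Q k i - hjRem Q k (i + 1)) *
        (hjHeight Q C k i + hjHeight Q C k (i + 1)) =
      hjRem Q k 0 * hjHeight Q C k n -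
        Q 0 * ∑ i ∈ Finset.Icc 1 n, ∑ j ∈ Finset.Icc 1 (i - 1),
          hjDual (fun m ↦ C (j + m)) (i - j) * hjGreedy Q k i * hjGreedy Q k j := by
  have hdigit (i : ℕ) : hjRem Q k i - hjRem Q k (i + 1) = hjGreedy Q k (i + 1) * Q (i + 1) :=
    sub_eq_of_eq_add (hjGreedy_mul_add_hjRem Q k i).symm
  have htotal : ∑ i ∈ Finset.Icc 1 n, hjGreedy Q k i * Q i = hjRem Q k 0 := by
    simpa [h.hjRem_last k] using sum_hjGreedy_mul_add_hjRem Q k n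
  simp only [hdigit, hjHeight, sum_mul_partialSum_add (fun i ↦ hjGreedy Q k i * Q i), htotal,
    Finset.mul_sum (Finset.Icc 1 n) _ (Q 0)]
  congr 1
  refine Finset.sum_congr rfl fun i hi ↦ ?_
  rw [Finset.mul_sum]
  refine Finset.sum_congr rfl fun j hj ↦ ?_
  rw [Finset.mem_Icc] at hi hj
  linear_combination hjGreedy Q k i * hjGreedy Q k j *
    h.minor_hjDual (i := i) (j := j) (by omega) hi.2

/-- **Hirzebruch–Jung data** of `d/q` for coprime `d > q ≥ 1` and `q̄`-data of
the quotient singularities `X_i = X(q_i;1,q_{i+1})` (see hypotheses).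

**Statement:** let `0 < k < d` have greedy `X`-decomposition `(k_1, …, k_n)`,
set `k̄ := Σ k_i q̄_i` and `B := Σ_{1 ≤ j < i ≤ n} (q̄_{X_j})_{i−j} k_i k_j`.
Regarding the lattice `𝕃(k) = {(r,s) ∈ ℤ≥0² : r + q·s ≡ k (mod d)}` as a subset
of `ℝ²`, twice the Lebesgue area of the bounded region
`ℝ≥0² \ convexHull 𝕃(k)` equals `k·k̄ − d·B`.  (Equivalently, the Newton
number `μ_X(k) = 1 + (2V − k − k̄)/d` equals
`((d−1) + (k−1)(k̄−1))/d − [0,k]Q[k,0]ᵗ`.) -/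
theorem newton_number_formula
    (n : ℕ) (d q : ℤ) (Q C Qbar : ℕ → ℤ) (QbarX : ℕ → ℕ → ℤ)
    (hn : 1 ≤ n) (hq1 : 1 ≤ q) (hqd : q < d) (hcop : Int.gcd d q = 1)
    (hQ0 : Q 0 = d) (hQ1 : Q 1 = q) (hQn : Q n = 1) (hQtop : Q (n + 1) = 0)
    (hQdec : ∀ i, i ≤ n → Q (i + 1) < Q i)
    (hC : ∀ i, 1 ≤ i → i ≤ n → Q (i - 1) = C i * Q i - Q (i + 1))
    (hC2 : ∀ i, 1 ≤ i → i ≤ n → 2 ≤ C i)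
    (hQbar0 : Qbar 0 = 0) (hQbarTop : Qbar (n + 1) = d)
    (hQbarPos : ∀ i, 1 ≤ i → i ≤ n → 0 < Qbar i)
    (hQbarCong : ∀ i, 1 ≤ i → i ≤ n → d ∣ q * Qbar i - Q i)
    (hQbarMin : ∀ i, 1 ≤ i → i ≤ n → ∀ t : ℤ, 0 < t → d ∣ q * t - Q i → Qbar i ≤ t)
    (hX0 : ∀ i, i ≤ n → QbarX i 0 = 0)
    (hXpos : ∀ i m, i + 1 ≤ n → 1 ≤ m → m ≤ n - i → 0 < QbarX i m)
    (hXcong : ∀ i m, i + 1 ≤ n → 1 ≤ m → m ≤ n - i →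
      Q i ∣ Q (i + 1) * QbarX i m - Q (i + m))
    (hXmin : ∀ i m, i + 1 ≤ n → 1 ≤ m → m ≤ n - i →
      ∀ t : ℤ, 0 < t → Q i ∣ Q (i + 1) * t - Q (i + m) → QbarX i m ≤ t)
    (k : ℤ) (hk0 : 0 < k) (hkd : k < d) :
    2 * (MeasureTheory.volume
        ({p : ℝ × ℝ | 0 ≤ p.1 ∧ 0 ≤ p.2} \
          convexHull ℝ {p : ℝ × ℝ | ∃ r s : ℤ,
            0 ≤ r ∧ 0 ≤ s ∧ d ∣ r + q * s - k ∧
            p = ((r : ℝ), (s : ℝ))})).toReal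
      = ((k * (∑ i ∈ Finset.Icc 1 n, hjGreedy Q k i * Qbar i)
          - d * ∑ i ∈ Finset.Icc 1 n, ∑ j ∈ Finset.Icc 1 (i - 1),
              QbarX j (i - j) * hjGreedy Q k i * hjGreedy Q k j : ℤ) : ℝ) := by
  subst hQ0 hQ1
  have h : IsHirzebruchJung n Q C := ⟨hQn, hQtop, hQdec, fun i hi ↦ by
    linarith [hC (i + 1) (by omega) hi, congrArg Q (Nat.add_sub_cancel i 1)]⟩
  have hQbar : ∀ i ∈ Finset.Icc 1 n, Qbar i = hjDual C i := fun i hi ↦ by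
    obtain ⟨hi1, hin⟩ := Finset.mem_Icc.1 hi
    refine IsLeast.unique ?_ (h.isLeast_hjDual hi)
    exact ⟨⟨hQbarPos i hi1 hin, hQbarCong i hi1 hin⟩,
      fun t ht ↦ hQbarMin i hi1 hin t ht.1 ht.2⟩
  have hQbarX : ∀ i ∈ Finset.Icc 1 n, ∀ j ∈ Finset.Icc 1 (i - 1),
      QbarX j (i - j) = hjDual (fun m ↦ C (j + m)) (i - j) := fun i hi j hj ↦ by
    rw [Finset.mem_Icc] at hi hj
    have hj1 : j + 1 ≤ n := by omega
    have hm1 : 1 ≤ i - j := by omega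
    have hmn : i - j ≤ n - j := by omega
    refine IsLeast.unique ?_ ((h.drop (by omega)).isLeast_hjDual (Finset.mem_Icc.2 ⟨hm1, hmn⟩))
    exact ⟨⟨hXpos j _ hj1 hm1 hmn, hXcong j _ hj1 hm1 hmn⟩,
      fun t ht ↦ hXmin j _ hj1 hm1 hmn t ht.1 ht.2⟩
  have hrem : hjRem Q k 0 = k := Int.emod_eq_of_lt hk0.le hkd
  have hkbar : ∑ i ∈ Finset.Icc 1 n, hjGreedy Q k i * Qbar i = hjHeight Q C k n :=
    Finset.sum_congr rfl fun i hi ↦ by rw [hQbar i hi]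
  refine (h.two_mul_volume_sdiff_convexHull k).trans ?_
  rw [h.sum_trapezoids_eq, hrem, hkbar]
  congr! 6 with i hi j hj
  rw [hQbarX i hi j hj]
end

section
/- For every 1 ≤ j ≤ n, the greedy X-decomposition of q_{j−1} − 1 has digit c_j − 1 at position j, digit c_i − 2 at every position i with j < i ≤ n, and digit 0 at every position i < j; in particular q_{j−1} − 1 = (c_j − 1)·q_j + Σ_{i=j+1}^n (c_i − 2)·q_i. -/
/-- A step of the Hirzebruch–Jung algorithm, i.e. division of `a` by `b` with quotient `c` rounded
up: `r` is the amount by which `c * b` exceeds `a`. The data `q_i`, `c_i` of a Hirzebruch–Jung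
continued fraction satisfy `IsHJStep q_{i-1} q_i c_i q_{i+1}`. -/
structure IsHJStep (a b c r : ℤ) : Prop where
  eq_sub : a = c * b - r
  nonneg : 0 ≤ r
  lt : r < b

namespace IsHJStep

variable {a b c r : ℤ}

theorem sub_divisor (h : IsHJStep a b c r) : IsHJStep (a - b) b (c - 1) r where
  eq_sub := by linear_combination h.eq_sub
  nonneg := h.nonneg
  lt := h.lt

theorem sub_one_ediv_emod (h : IsHJStep a b c r) :
    (a - 1) / b = c - 1 ∧ (a - 1) % b = b - r - 1 := by
  have hr := h.nonneg
  have hrb := h.lt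
  exact (Int.ediv_emod_unique (by omega)).2
    ⟨by linear_combination -h.eq_sub, by omega, by omega⟩

end IsHJStep

theorem isHJStep_of_strictAntiOn {n : ℕ} {Q C : ℕ → ℤ} (hQ : StrictAntiOn Q (Set.Iic (n + 1)))
    (hQtop : 0 ≤ Q (n + 1)) (hC : ∀ i, 1 ≤ i → i ≤ n → Q (i - 1) = C i * Q i - Q (i + 1))
    {i : ℕ} (hi : i < n) : IsHJStep (Q i) (Q (i + 1)) (C (i + 1)) (Q (i + 2)) where
  eq_sub := hC (i + 1) i.succ_pos hi
  nonneg := hQtop.trans (hQ.antitoneOn (by grind) Set.self_mem_Iic (by omega))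
  lt := hQ (by grind) (by grind) (by omega)

theorem sum_Icc_sub_two_mul {R : Type*} [CommRing R] {Q C : ℕ → R} {m n : ℕ} (hmn : m ≤ n)
    (hC : ∀ i, m < i → i ≤ n → Q (i - 1) = C i * Q i - Q (i + 1)) :
    ∑ i ∈ Finset.Icc (m + 1) n, (C i - 2) * Q i = (Q m - Q (m + 1)) - (Q n - Q (n + 1)) := by
  induction n, hmn using Nat.le_induction with
  | base => simp
  | succ n hmn ih =>
    have hrec : Q n = C (n + 1) * Q (n + 1) - Q (n + 2) :=
      hC (n + 1) (Nat.lt_succ_of_le hmn) le_rfl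
    rw [Finset.sum_Icc_succ_top (by omega), ih fun i hmi hin => hC i hmi (hin.trans n.le_succ)]
    linear_combination -hrec

section Greedy

variable {Q C : ℕ → ℤ} {k : ℤ} {m n : ℕ}

theorem hjRem_eq_self_of_lt (hk : 0 ≤ k) (hlt : ∀ i ≤ m, k < Q i) : hjRem Q k m = k := by
  induction m with
  | zero => exact Int.emod_eq_of_lt hk (hlt 0 le_rfl)
  | succ m ih =>
    rw [hjRem, ih fun i hi => hlt i (hi.trans m.le_succ)]
    exact Int.emod_eq_of_lt hk (hlt _ le_rfl)

theorem hjGreedy_eq_zero_of_lt (hk : 0 ≤ k) (hlt : ∀ i ≤ m, k < Q i) : hjGreedy Q k m = 0 := by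
  cases m with
  | zero => exact Int.ediv_eq_zero_of_lt hk (hlt 0 le_rfl)
  | succ m =>
    rw [hjGreedy, hjRem_eq_self_of_lt hk fun i hi => hlt i (hi.trans m.le_succ)]
    exact Int.ediv_eq_zero_of_lt hk (hlt _ le_rfl)

theorem IsHJStep.hjGreedy_succ {a c r : ℤ} (h : IsHJStep a (Q (m + 1)) c r)
    (hm : hjRem Q k m = a - 1) : hjGreedy Q k (m + 1) = c - 1 := by
  rw [hjGreedy, hm, h.sub_one_ediv_emod.1]

theorem IsHJStep.hjRem_succ {a c r : ℤ} (h : IsHJStep a (Q (m + 1)) c r)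
    (hm : hjRem Q k m = a - 1) : hjRem Q k (m + 1) = Q (m + 1) - r - 1 := by
  rw [hjRem, hm, h.sub_one_ediv_emod.2]

theorem hjRem_eq_sub_sub_one
    (hstep : ∀ i, m ≤ i → i < n → IsHJStep (Q i) (Q (i + 1)) (C (i + 1)) (Q (i + 2)))
    (hm : hjRem Q k m = Q m - Q (m + 1) - 1) {i : ℕ} (hmi : m ≤ i) (hin : i ≤ n) :
    hjRem Q k i = Q i - Q (i + 1) - 1 := by
  induction i, hmi using Nat.le_induction with
  | base => exact hm
  | succ i hmi ih => exact (hstep i hmi hin).sub_divisor.hjRem_succ (ih (Nat.le_of_succ_le hin))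

theorem hjGreedy_eq_sub_two
    (hstep : ∀ i, m ≤ i → i < n → IsHJStep (Q i) (Q (i + 1)) (C (i + 1)) (Q (i + 2)))
    (hm : hjRem Q k m = Q m - Q (m + 1) - 1) {i : ℕ} (hmi : m < i) (hin : i ≤ n) :
    hjGreedy Q k i = C i - 2 := by
  obtain ⟨i, rfl⟩ := Nat.exists_eq_add_one_of_ne_zero (Nat.ne_zero_of_lt hmi)
  have hmi' : m ≤ i := Nat.le_of_lt_succ hmi
  have hrem := hjRem_eq_sub_sub_one hstep hm hmi' (Nat.le_of_succ_le hin)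
  rw [(hstep i hmi' hin).sub_divisor.hjGreedy_succ hrem]
  ring

end Greedy

/-- The last summand `q_n - q_{n+1} - 1` is the greedy remainder after position `n`; for a complete
expansion, where `q_{n+1} = 0`, it is `gcd(d, q) - 1`. -/
theorem greedy_decomposition_of_q_pred_general
    (n : ℕ) (Q C : ℕ → ℤ) (hQtop : 0 ≤ Q (n + 1))
    (hQdec : ∀ i, i ≤ n → Q (i + 1) < Q i)
    (hC : ∀ i, 1 ≤ i → i ≤ n → Q (i - 1) = C i * Q i - Q (i + 1)) :
    ∀ j, 1 ≤ j → j ≤ n →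
      (hjGreedy Q (Q (j - 1) - 1) j = C j - 1) ∧
      (∀ i, j < i → i ≤ n → hjGreedy Q (Q (j - 1) - 1) i = C i - 2) ∧
      (∀ i, 1 ≤ i → i < j → hjGreedy Q (Q (j - 1) - 1) i = 0) ∧
      (Q (j - 1) - 1
        = (C j - 1) * Q j + ∑ i ∈ Finset.Icc (j + 1) n, (C i - 2) * Q i
          + (Q n - Q (n + 1) - 1)) := by
  intro j hj hjn
  obtain ⟨p, rfl⟩ := Nat.exists_eq_add_of_le' hj
  rw [Nat.add_sub_cancel]
  have hQ : StrictAntiOn Q (Set.Iic (n + 1)) :=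
    strictAntiOn_of_add_one_lt Set.ordConnected_Iic fun i _ _ hi =>
      hQdec i (Nat.le_of_succ_le_succ hi)
  have hstep (i : ℕ) (hi : i < n) := isHJStep_of_strictAntiOn hQ hQtop hC hi
  have hp := hstep p hjn
  have hk : 0 ≤ Q p - 1 :=
    Int.le_sub_one_of_lt (hp.nonneg.trans_lt (hp.lt.trans (hQdec p (Nat.le_of_succ_le hjn))))
  have hlt : ∀ i ≤ p, Q p - 1 < Q i := fun i hi =>
    Int.sub_one_lt_of_le (hQ.antitoneOn (by grind) (by grind) hi)
  have hrem_p : hjRem Q (Q p - 1) p = Q p - 1 := hjRem_eq_self_of_lt hk hlt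
  have hrem : hjRem Q (Q p - 1) (p + 1) = Q (p + 1) - Q (p + 2) - 1 := hp.hjRem_succ hrem_p
  have hsum := sum_Icc_sub_two_mul hjn fun i hpi hin => hC i (Nat.one_le_of_lt hpi) hin
  exact ⟨hp.hjGreedy_succ hrem_p,
    fun i hpi hin => hjGreedy_eq_sub_two (fun i _ => hstep i) hrem hpi hin,
    fun i _ hip => hjGreedy_eq_zero_of_lt hk fun l hl => hlt l (by omega),
    by linear_combination hp.eq_sub - hsum⟩

/-- **Hirzebruch–Jung data** of `d/q` for coprime `d > q ≥ 1`:
`q_0 = d > q_1 = q > ⋯ > q_n = 1 > q_{n+1} = 0`, `c_i ≥ 2` with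
`q_{i-1} = c_i q_i − q_{i+1}`.

**Statement:** for every `1 ≤ j ≤ n`, the greedy `X`-decomposition of
`q_{j−1} − 1` has digit `c_j − 1` at position `j`, digit `c_i − 2` at every
position `j < i ≤ n`, and digit `0` at every position `i < j`; in particular
`q_{j−1} − 1 = (c_j − 1)·q_j + Σ_{i=j+1}^n (c_i − 2)·q_i`. -/
theorem greedy_decomposition_of_q_pred
    (n : ℕ) (d q : ℤ) (Q C : ℕ → ℤ)
    (hn : 1 ≤ n) (hq1 : 1 ≤ q) (hqd : q < d) (hcop : Int.gcd d q = 1)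
    (hQ0 : Q 0 = d) (hQ1 : Q 1 = q) (hQn : Q n = 1) (hQtop : Q (n + 1) = 0)
    (hQdec : ∀ i, i ≤ n → Q (i + 1) < Q i)
    (hC : ∀ i, 1 ≤ i → i ≤ n → Q (i - 1) = C i * Q i - Q (i + 1))
    (hC2 : ∀ i, 1 ≤ i → i ≤ n → 2 ≤ C i) :
    ∀ j, 1 ≤ j → j ≤ n →
      (hjGreedy Q (Q (j - 1) - 1) j = C j - 1) ∧
      (∀ i, j < i → i ≤ n → hjGreedy Q (Q (j - 1) - 1) i = C i - 2) ∧
      (∀ i, 1 ≤ i → i < j → hjGreedy Q (Q (j - 1) - 1) i = 0) ∧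
      (Q (j - 1) - 1
        = (C j - 1) * Q j + ∑ i ∈ Finset.Icc (j + 1) n, (C i - 2) * Q i) := by
  simpa only [hQn, hQtop, sub_zero, sub_self, add_zero] using
    greedy_decomposition_of_q_pred_general n Q C hQtop.ge hQdec hC
end
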